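/- Let (E, τ) be a violator space: E is a finite set and τ : 2^E → 2^E satisfies C1 (X ⊆ τ(X) for all X ⊆ E) and C22 (F ⊆ G ⊆ τ(F) implies τ(G) = τ(F)). Then (E, τ) is uniquely generated if and only if τ satisfies the anti-exchange property: for all X ⊆ E and all distinct p, q ∈ E with p, q ∉ τ(X), if p ∈ τ(X ∪ {q}) then q ∉ τ(X ∪ {p}). -/

import Mathlib

/-!
Everything rests on restating anti-exchange in terms of generators: if `insert p X` and `insert q X`
with `p ≠ q` have the same image, then it is already the image of `X`. Unique generation gives this
because it makes generators closed under intersection. Conversely, adding the elements of a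
generator `C` one at a time shows that whenever `insert p Y` and `C ∌ p` generate the same set, so
does `Y`; hence no element of a basis can be missing from another generator, and two bases agree.
-/

/-- `B` is a basis of `X` w.r.t. `τ`: a generator of `X` minimal under inclusion. -/
def IsBasis {α : Type*} (τ : Finset α → Finset α) (X B : Finset α) : Prop :=
  τ B = τ X ∧ ∀ B' : Finset α, τ B' = τ X → B' ⊆ B → B' = B

/-- `τ` is the operator of a violator space, with the axioms C1 and C22. The ground type may be
infinite: only finite sets are assigned an image. -/
structure IsViolator {α : Type*} (τ : Finset α → Finset α) : Prop where
  subset_apply : ∀ X, X ⊆ τ X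
  apply_eq_of_subset : ∀ {F G}, F ⊆ G → G ⊆ τ F → τ G = τ F

/-- Unique generation of the violator space with operator `τ`: every finite set has exactly one
basis. A basis of `X` is not required to be a subset of `X`. -/
def UniquelyGenerated {α : Type*} (τ : Finset α → Finset α) : Prop :=
  ∀ X, ∃! B, IsBasis τ X B

/-- The anti-exchange property of `τ`, as for closure operators of convex geometries. -/
def AntiExchange {α : Type*} [DecidableEq α] (τ : Finset α → Finset α) : Prop :=
  ∀ (X : Finset α) (p q : α), p ≠ q → p ∉ τ X → q ∉ τ X →
    p ∈ τ (insert q X) → q ∉ τ (insert p X)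

theorem isBasis_iff_minimal {α : Type*} {τ : Finset α → Finset α} {X B : Finset α} :
    IsBasis τ X B ↔ Minimal (fun Y ↦ τ Y = τ X) B :=
  and_congr_right fun _ ↦ ⟨fun h Y hY hYB ↦ (h Y hY hYB).ge, fun h _ hY hYB ↦
    hYB.antisymm (h hY hYB)⟩

theorem exists_isBasis_subset {α : Type*} (τ : Finset α → Finset α) (X : Finset α) :
    ∃ B ⊆ X, IsBasis τ X B := by
  simp only [isBasis_iff_minimal]
  exact exists_minimal_le_of_wellFoundedLT (fun Y ↦ τ Y = τ X) X rfl

namespace IsViolator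

variable {α : Type*} {τ : Finset α → Finset α} {A B C X Y : Finset α} {p q : α}

theorem apply_eq_of_subset_of_subset (hτ : IsViolator τ) (hAB : A ⊆ B) (hBC : B ⊆ C)
    (hAC : τ A = τ C) : τ B = τ A :=
  hτ.apply_eq_of_subset hAB <| hAC ▸ hBC.trans (hτ.subset_apply C)

variable [DecidableEq α]

theorem apply_insert_of_mem (hτ : IsViolator τ) (hp : p ∈ τ X) : τ (insert p X) = τ X :=
  hτ.apply_eq_of_subset (Finset.subset_insert p X) (Finset.insert_subset hp (hτ.subset_apply X))

theorem mem_apply_insert_self (hτ : IsViolator τ) (p : α) (X : Finset α) : p ∈ τ (insert p X) :=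
  hτ.subset_apply _ (Finset.mem_insert_self p X)

theorem apply_union_of_apply_eq (hτ : IsViolator τ) (hAB : τ A = τ B) : τ (A ∪ B) = τ A :=
  hτ.apply_eq_of_subset Finset.subset_union_left <|
    Finset.union_subset (hτ.subset_apply A) (hAB ▸ hτ.subset_apply B)

theorem apply_insert_eq_apply_insert (hτ : IsViolator τ) (hp : p ∈ τ (insert q X))
    (hq : q ∈ τ (insert p X)) : τ (insert p X) = τ (insert q X) :=
  calc τ (insert p X) = τ (insert q (insert p X)) := (hτ.apply_insert_of_mem hq).symm
    _ = τ (insert p (insert q X)) := by rw [Finset.insert_comm]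
    _ = τ (insert q X) := hτ.apply_insert_of_mem hp

theorem antiExchange_iff_apply_insert_eq (hτ : IsViolator τ) :
    AntiExchange τ ↔
      ∀ (X : Finset α) (p q : α), p ≠ q → τ (insert p X) = τ (insert q X) →
        τ (insert p X) = τ X := by
  constructor
  · intro hanti X p q hpq heq
    by_cases hp : p ∈ τ X
    · exact hτ.apply_insert_of_mem hp
    by_cases hq : q ∈ τ X
    · exact heq.trans (hτ.apply_insert_of_mem hq)
    have hpq' : p ∈ τ (insert q X) := heq ▸ hτ.mem_apply_insert_self p X
    have hqp : q ∈ τ (insert p X) := heq ▸ hτ.mem_apply_insert_self q X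
    exact absurd hqp (hanti X p q hpq hp hq hpq')
  · intro hcancel X p q hpq hp _ hpq' hqp
    have heq : τ (insert p X) = τ X :=
      hcancel X p q hpq (hτ.apply_insert_eq_apply_insert hpq' hqp)
    exact hp (heq ▸ hτ.mem_apply_insert_self p X)

theorem apply_inter_of_uniquelyGenerated (hτ : IsViolator τ) (hunique : UniquelyGenerated τ)
    (hAB : τ A = τ B) : τ (A ∩ B) = τ A := by
  obtain ⟨D, hDA, hD⟩ := exists_isBasis_subset τ A
  obtain ⟨D', hDB, hD'⟩ := exists_isBasis_subset τ B
  obtain rfl : D = D' := (hunique A).unique hD (by rwa [IsBasis, hAB])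
  have hinter : τ (A ∩ B) = τ D :=
    hτ.apply_eq_of_subset_of_subset (Finset.subset_inter hDA hDB) Finset.inter_subset_left hD.1
  exact hinter.trans hD.1

theorem antiExchange_of_uniquelyGenerated (hτ : IsViolator τ) (hunique : UniquelyGenerated τ) :
    AntiExchange τ := by
  refine hτ.antiExchange_iff_apply_insert_eq.2 fun X p q hpq heq ↦ ?_
  have hinter : insert p X ∩ insert q X = X := by grind
  simpa only [hinter] using (hτ.apply_inter_of_uniquelyGenerated hunique heq).symm

theorem apply_eq_apply_union_of_notMem (hτ : IsViolator τ) (hanti : AntiExchange τ) (hp : p ∉ C)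
    (heq : τ (insert p Y) = τ (Y ∪ C)) : τ Y = τ (Y ∪ C) := by
  induction C using Finset.induction with
  | empty => rw [Finset.union_empty]
  | insert q C _ ih =>
    obtain ⟨hpq, hpC⟩ : p ≠ q ∧ p ∉ C := by simpa only [Finset.mem_insert, not_or] using hp
    rw [Finset.union_insert] at heq ⊢
    have hYC : Y ∪ C ⊆ τ (insert p Y) :=
      heq ▸ (Finset.subset_insert q _).trans (hτ.subset_apply _)
    have hpYC : τ (insert p (Y ∪ C)) = τ (insert p Y) :=
      hτ.apply_eq_of_subset (Finset.insert_subset_insert p Finset.subset_union_left)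
        (Finset.insert_subset (hτ.mem_apply_insert_self p Y) hYC)
    have hcancel : τ (insert p (Y ∪ C)) = τ (Y ∪ C) :=
      hτ.antiExchange_iff_apply_insert_eq.1 hanti _ p q hpq (hpYC.trans heq)
    calc τ Y = τ (Y ∪ C) := ih hpC (hpYC.symm.trans hcancel)
      _ = τ (insert p (Y ∪ C)) := hcancel.symm
      _ = τ (insert q (Y ∪ C)) := hpYC.trans heq

theorem apply_eq_of_apply_insert_eq_of_notMem (hτ : IsViolator τ) (hanti : AntiExchange τ)
    (hp : p ∉ C) (heq : τ (insert p Y) = τ C) : τ Y = τ C := by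
  have hpYC : τ (insert p Y ∪ C) = τ C := (hτ.apply_union_of_apply_eq heq).trans heq
  have hYC : τ (Y ∪ C) = τ C :=
    hτ.apply_eq_of_subset_of_subset Finset.subset_union_right
      (Finset.union_subset_union_left (Finset.subset_insert p Y)) hpYC.symm
  exact (hτ.apply_eq_apply_union_of_notMem hanti hp (heq.trans hYC.symm)).trans hYC

theorem isBasis_subset_of_apply_eq (hτ : IsViolator τ) (hanti : AntiExchange τ)
    (hB : IsBasis τ X B) (hC : τ C = τ X) : B ⊆ C := by
  intro p hpB
  by_contra hpC
  have heq : τ (insert p (B.erase p)) = τ C := by rw [Finset.insert_erase hpB, hB.1, hC]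
  have herase : τ (B.erase p) = τ X :=
    (hτ.apply_eq_of_apply_insert_eq_of_notMem hanti hpC heq).trans hC
  exact Finset.erase_eq_self.1 (hB.2 _ herase (Finset.erase_subset p B)) hpB

theorem uniquelyGenerated_of_antiExchange (hτ : IsViolator τ) (hanti : AntiExchange τ) :
    UniquelyGenerated τ := by
  intro X
  obtain ⟨B, -, hB⟩ := exists_isBasis_subset τ X
  exact ⟨B, hB, fun C hC ↦ hB.2 C hC.1 (hτ.isBasis_subset_of_apply_eq hanti hC hB.1)⟩

end IsViolator

theorem violator_uniquelyGenerated_iff_antiExchange_general {α : Type*} [DecidableEq α]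
    {τ : Finset α → Finset α} (hτ : IsViolator τ) : UniquelyGenerated τ ↔ AntiExchange τ :=
  ⟨hτ.antiExchange_of_uniquelyGenerated, hτ.uniquelyGenerated_of_antiExchange⟩

/-- A violator space (C1 + C22) is uniquely generated iff τ satisfies
the anti-exchange property. -/
theorem violator_uniquelyGenerated_iff_antiExchange {α : Type*} [Fintype α] [DecidableEq α]
    (τ : Finset α → Finset α)
    (hC1 : ∀ X : Finset α, X ⊆ τ X)
    (hC22 : ∀ F G : Finset α, F ⊆ G → G ⊆ τ F → τ G = τ F) :
    (∀ X : Finset α, ∃! B : Finset α, IsBasis τ X B) ↔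
    (∀ (X : Finset α) (p q : α), p ≠ q → p ∉ τ X → q ∉ τ X →
      p ∈ τ (insert q X) → q ∉ τ (insert p X)) :=
  violator_uniquelyGenerated_iff_antiExchange_general ⟨hC1, hC22 _ _⟩
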